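/- Let r be an odd prime and let p₁ and p₂ be distinct primes, both different from r, such that r divides both p₁ − 1 and p₂ − 1. Let n be the dimension of an irreducible nontrivial module V for the cyclic group Z_{p₁} over the field of order p₂. Then there exist an extraspecial p₂-group E of order p₂^{2n+1} and an action of Z_{p₁} × Z_r by automorphisms on E such that the semidirect product G = E ⋊ (Z_{p₁} × Z_r) satisfies: the set of degrees of the irreducible complex characters of G is {1, r·p₁, r·p₂ⁿ}, the order of G is divisible by no primes other than p₁, p₂, and r, G has a unique minimal normal subgroup which is a p₂-group, and G has Fitting height 2. -/

import Mathlib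

/-! ### Strategy

Let `F` be the field of order `p₂`. The group `E` is the Heisenberg group `Heis F V` on
`V ⊕ V* ⊕ F`. Since `r` divides `p₂ - 1`, there is an embedding `l` of `Z_r` in the units of `F`,
and `(g, s)` in `Z_{p₁} × Z_r` acts on `E` by `(v, f, z) ↦ (l(s) g v, l(s) f ∘ g⁻¹, l(s)² z)`.
Irreducibility of `V` and `p₁ ≠ r` imply that `Z_{p₁} × Z_r` acts freely on the nonzero vectors of
`V` (`isFree_of_irr`), hence also on those of `V*`; as `r` is odd, `Z_r` acts freely on the nonzero
elements of the centre `F`, while `Z_{p₁}` centralises it.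

Degrees are computed from one principle (`finrank_eq_index`): if `w` is an eigenvector of a
subgroup `B` and of a conjugation-invariant set `A`, and no element outside `B` preserves the
weight of `A` on `w`, then the irreducible representation containing `w` has dimension the index
of `B`. An irreducible representation of `G` falls under one of three cases:

* `E` acts trivially: the representation is one of an abelian group and has degree `1`;
* the centre acts trivially but `E` does not (`finrank_of_central_trivial`): here `A = B = E`, and
  the degree is `r p₁`;
* the centre acts nontrivially (`finrank_of_central_nontrivial`): here `A = V* × F` and
  `B = (V* × F) Z_{p₁}`, and the degree is `r p₂ⁿ`.

All three cases occur (`exists_irr`). Commutator computations show that every nontrivial normal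
subgroup of `G` contains the centre of `E` (`cen_le`), which is thus the unique minimal normal
subgroup. Finally `E` is nilpotent with abelian quotient, and `G` is not nilpotent: its centre
would contain that of `E`, which `Z_r` moves. So the Fitting height is `2`. -/

/-- The set of degrees of the irreducible complex characters of `G`. -/
def charDegrees (G : Type) [Group G] : Set ℕ :=
  {d | ∃ V : FDRep ℂ G, CategoryTheory.Simple V ∧ Module.finrank ℂ V = d}

/-- `G` is a *composite degree group* (CDG): `1` is the only prime power among the degrees of
the irreducible complex characters of `G`. -/
def IsCDG (G : Type) [Group G] : Prop :=
  ∀ d ∈ charDegrees G, IsPrimePow d → d = 1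

/-- The quotient `B/A` (for normal subgroups `A ≤ B` of `G`) is a nilpotent group. -/
def IsNilpotentQuot {G : Type*} [Group G] (A B : Subgroup G) [A.Normal] : Prop :=
  Group.IsNilpotent (↥(B.map (QuotientGroup.mk' A)))

/-- `F` is a normal series `⊥ = F 0 ≤ F 1 ≤ ⋯ ≤ F n = ⊤` of normal subgroups of `G`
with every quotient `F (i+1) / F i` nilpotent. -/
def IsFittingSeries {G : Type*} [Group G] (F : ℕ → Subgroup G) (n : ℕ) : Prop :=
  F 0 = ⊥ ∧ F n = ⊤ ∧ (∀ i, (F i).Normal) ∧ (∀ i, i < n → F i ≤ F (i + 1)) ∧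
    ∀ i, i < n → ∀ hi : (F i).Normal, @IsNilpotentQuot G _ (F i) (F (i + 1)) hi

/-- The Fitting height of `G` equals `n`: `n` is the length of a shortest normal series of `G`
with nilpotent quotients. -/
def FittingHeightIs (G : Type*) [Group G] (n : ℕ) : Prop :=
  (∃ F : ℕ → Subgroup G, IsFittingSeries F n) ∧
    ∀ m : ℕ, (∃ F : ℕ → Subgroup G, IsFittingSeries F m) → n ≤ m

/-- `N` is a minimal normal subgroup of `G`: it is nontrivial, normal, and contains no smaller
nontrivial normal subgroup of `G`. -/
def IsMinimalNormal {G : Type*} [Group G] (N : Subgroup G) : Prop :=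
  N.Normal ∧ N ≠ ⊥ ∧ ∀ M : Subgroup G, M.Normal → M ≤ N → M = ⊥ ∨ M = N

/-- `N` is the unique minimal normal subgroup of `G`. -/
def IsUniqueMinimalNormal (G : Type*) [Group G] (N : Subgroup G) : Prop :=
  IsMinimalNormal N ∧ ∀ M : Subgroup G, IsMinimalNormal M → M = N

/-- An extraspecial `p`-group: a `p`-group whose center and commutator subgroup coincide
and have order `p`. -/
def IsExtraspecial (p : ℕ) (E : Type*) [Group E] : Prop :=
  IsPGroup p E ∧ Subgroup.center E = commutator E ∧ Nat.card (Subgroup.center E) = p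

/-! ### Irreducible representations and `charDegrees` -/

/-- A representation is irreducible: it is nonzero and has no invariant subspace other than `⊥`
and `⊤`. This elementary form replaces the categorical simplicity of `FDRep`. -/
def Irr {G W : Type*} [Group G] [AddCommGroup W] [Module ℂ W] (ρ : Representation ℂ G W) : Prop :=
  Nontrivial W ∧ ∀ U : Submodule ℂ W, (∀ g, ∀ w ∈ U, ρ g w ∈ U) → U = ⊥ ∨ U = ⊤

open CategoryTheory in
theorem irr_of_simple {G : Type} [Group G] (V : FDRep ℂ G) [hV : Simple V] : Irr V.ρ := by
  refine ⟨?_, fun U hU => ?_⟩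
  · by_contra hn
    rw [not_nontrivial_iff_subsingleton] at hn
    refine id_nonzero V ?_
    apply Action.Hom.ext
    apply FGModuleCat.hom_ext
    ext x
    exact Subsingleton.elim (α := V) _ _
  · -- the inclusion of an invariant subspace is a monomorphism into a simple object
    let σ : Representation ℂ G U := Subrepresentation.toRepresentation
      (⟨U, hU⟩ : Subrepresentation V.ρ)
    let f : FDRep.of σ ⟶ V := ⟨FGModuleCat.ofHom U.subtype, fun g => by
      apply FGModuleCat.hom_ext; rfl⟩
    have hm : Mono f := by
      constructor
      intro Z a b hab
      apply Action.Hom.ext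
      apply FGModuleCat.hom_ext
      ext x
      exact congrArg (fun h => h.hom.hom.hom x) hab
    by_cases hf : f = 0
    · left
      rw [eq_bot_iff]
      intro u hu
      exact congrArg (fun h => h.hom.hom.hom (⟨u, hu⟩ : U)) hf
    · right
      have := isIso_of_mono_of_nonzero hf
      rw [eq_top_iff]
      intro v _
      have h1 : inv f ≫ f = 𝟙 V := IsIso.inv_hom_id f
      have h2 := congrArg (fun h => h.hom.hom.hom v) h1
      change U.subtype ((inv f).hom.hom.hom v) = v at h2
      rw [← h2]
      exact Subtype.property _

/-- An irreducible representation over `ℂ` has scalar endomorphisms, and over a finite group this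
implies simplicity of the corresponding object of `FDRep`. -/
theorem simple_of_irr {G : Type} [Group G] [Finite G] {W : Type} [AddCommGroup W] [Module ℂ W]
    [FiniteDimensional ℂ W] (ρ : Representation ℂ G W) (h : Irr ρ) :
    CategoryTheory.Simple (FDRep.of ρ) := by
  obtain ⟨hn, hU⟩ := h
  have : ρ.IsIrreducible := by
    have : Nontrivial (Subrepresentation ρ) := by
      refine ⟨⊥, ⊤, fun h => ?_⟩
      obtain ⟨x, hx⟩ := exists_ne (0 : W)
      have : x ∈ (⊥ : Subrepresentation ρ).toSubmodule := by rw [h]; trivial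
      exact hx this
    refine ⟨fun U => ?_⟩
    rcases hU U.toSubmodule (fun g w hw => U.apply_mem_toSubmodule g hw) with h | h
    · left; exact Subrepresentation.toSubmodule_injective h
    · right; exact Subrepresentation.toSubmodule_injective h
  rw [FDRep.simple_iff_end_is_rank_one]
  rw [← Representation.IsIrreducible.finrank_intertwiningMap_self ρ]
  rw [← (FDRep.forget₂HomLinearEquiv (FDRep.of ρ) (FDRep.of ρ)).finrank_eq]
  refine LinearEquiv.finrank_eq ?_
  exact Rep.homLinearEquiv _ _

/-- An element outside a normal subgroup `N` acts nontrivially in some irreducible representation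
that is trivial on `N`: it acts nontrivially on `ℂ[G / N]`, which is a sum of simple
submodules. -/
theorem exists_irr {G : Type} [Group G] [Finite G] (N : Subgroup G) [N.Normal] (x : G)
    (hx : x ∉ N) : ∃ (W : Type) (_ : AddCommGroup W) (_ : Module ℂ W) (_ : FiniteDimensional ℂ W)
      (ρ : Representation ℂ G W), Irr ρ ∧ (∀ y ∈ N, ρ y = 1) ∧ ρ x ≠ 1 := by
  let ρ := Representation.ofMulAction ℂ G (G ⧸ N)
  have hN : ∀ y ∈ N, ∀ w, ρ y w = w := by
    intro y hy w
    induction w using MonoidAlgebra.induction_linear with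
    | zero => simp
    | add a b ha hb => rw [map_add, ha, hb]
    | single q c =>
      rw [Representation.ofMulAction_single]
      congr 1
      induction q using QuotientGroup.induction_on with
      | H z =>
        rw [MulAction.Quotient.smul_coe, QuotientGroup.eq, smul_eq_mul]
        have := (inferInstance : N.Normal).conj_mem _ (N.inv_mem hy) z⁻¹
        simpa [mul_assoc] using this
  have hxx : ρ x (MonoidAlgebra.single ((1 : G) : G ⧸ N) 1)
      ≠ MonoidAlgebra.single ((1 : G) : G ⧸ N) 1 := by
    rw [Representation.ofMulAction_single, MulAction.Quotient.smul_coe]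
    intro h
    have h2 := (MonoidAlgebra.single_left_inj (one_ne_zero (α := ℂ))).1 h
    rw [QuotientGroup.eq] at h2
    exact hx (by simpa using h2)
  have hss : IsSemisimpleModule (MonoidAlgebra ℂ G) ρ.asModule := inferInstance
  by_contra hcon
  push Not at hcon
  have key : ∀ S : Submodule (MonoidAlgebra ℂ G) ρ.asModule,
      IsSimpleModule (MonoidAlgebra ℂ G) S → ∀ s : MonoidAlgebra ℂ (G ⧸ N),
      s ∈ S → ρ x s = s := by
    intro S hS s hs
    let T := Subrepresentation.ofSubmodule' S
    have hat : IsAtom S := isSimpleModule_iff_isAtom.1 hS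
    have h1 : Irr T.toRepresentation := by
      constructor
      · rw [Submodule.nontrivial_iff_ne_bot]
        intro h
        apply hat.1
        rw [eq_bot_iff]
        intro y hy
        have : y ∈ T.toSubmodule := hy
        rw [h] at this
        exact this
      · intro U hU
        let U' : Subrepresentation ρ := ⟨U.map T.toSubmodule.subtype, by
          rintro g _ ⟨u, hu, rfl⟩
          exact ⟨_, hU g u hu, rfl⟩⟩
        have hle : U'.asSubmodule ≤ S := by
          rintro _ ⟨u, hu, rfl⟩
          exact u.2
        rcases hat.le_iff.1 hle with h | h
        · left
          rw [eq_bot_iff]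
          intro u hu
          have : (u : MonoidAlgebra ℂ (G ⧸ N)) ∈ U'.asSubmodule := ⟨u, hu, rfl⟩
          rw [h] at this
          exact Subtype.ext this
        · right
          rw [eq_top_iff]
          intro u _
          have : (u : MonoidAlgebra ℂ (G ⧸ N)) ∈ U'.asSubmodule := by rw [h]; exact u.2
          obtain ⟨u', hu', he⟩ := this
          rwa [← Subtype.ext he]
    have h2 := hcon T.toSubmodule inferInstance inferInstance inferInstance T.toRepresentation h1
      (fun y hy => by ext1 w; exact Subtype.ext (hN y hy w))
    have h3 := LinearMap.congr_fun h2 ⟨s, hs⟩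
    exact congrArg Subtype.val h3
  have htop := IsSemisimpleModule.sSup_simples_eq_top (MonoidAlgebra ℂ G) ρ.asModule
  have hall : ∀ w : MonoidAlgebra ℂ (G ⧸ N), ρ x w = w := by
    intro w
    have hw : (w : ρ.asModule) ∈ sSup { m : Submodule (MonoidAlgebra ℂ G) ρ.asModule |
      IsSimpleModule (MonoidAlgebra ℂ G) m } := by rw [htop]; trivial
    rw [sSup_eq_iSup'] at hw
    induction hw using Submodule.iSup_induction' with
    | mem S s hs => exact key S.1 S.2 s hs
    | zero => exact map_zero (ρ x)
    | add a b _ _ ha hb => exact (map_add (ρ x) a b).trans (congrArg₂ (· + ·) ha hb)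
  exact hxx (hall _)

theorem mem_charDegrees {G : Type} [Group G] [Finite G] {d : ℕ} :
    d ∈ charDegrees G ↔ ∃ (W : Type) (_ : AddCommGroup W) (_ : Module ℂ W)
      (_ : FiniteDimensional ℂ W) (ρ : Representation ℂ G W), Irr ρ ∧ Module.finrank ℂ W = d := by
  constructor
  · rintro ⟨V, hV, hd⟩
    exact ⟨V, inferInstance, inferInstance, inferInstance, V.ρ, irr_of_simple V, hd⟩
  · rintro ⟨W, _, _, _, ρ, h, hd⟩
    exact ⟨FDRep.of ρ, simple_of_irr ρ h, hd⟩

/-! ### Dimension as the index of the stabiliser of a weight -/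

/-- Commuting operators on a nonzero invariant subspace have a common eigenvector there. -/
theorem exists_common_eigenvector {ι W : Type*} [AddCommGroup W] [Module ℂ W]
    [FiniteDimensional ℂ W] (T : ι → Module.End ℂ W) (hc : ∀ i j w, T i (T j w) = T j (T i w))
    (U : Submodule ℂ W) (hU : U ≠ ⊥) (hinv : ∀ i, ∀ w ∈ U, T i w ∈ U) :
    ∃ w ∈ U, w ≠ 0 ∧ ∀ i, ∃ c : ℂ, T i w = c • w := by
  induction hd : Module.finrank ℂ U using Nat.strong_induction_on generalizing U with
  | _ d ih =>
  by_cases hall : ∀ i, ∃ c : ℂ, ∀ w ∈ U, T i w = c • w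
  · obtain ⟨w, hw, hw0⟩ := U.exists_mem_ne_zero_of_ne_bot hU
    exact ⟨w, hw, hw0, fun i => (hall i).imp fun c h => h w hw⟩
  · push Not at hall
    obtain ⟨i, hi⟩ := hall
    have : Nontrivial U := (Submodule.nontrivial_iff_ne_bot).2 hU
    obtain ⟨c, hcc⟩ := Module.End.exists_eigenvalue ((T i).restrict (hinv i))
    obtain ⟨u, hu⟩ := hcc.exists_hasEigenvector
    -- the `c`-eigenspace of `T i` inside `U` is a smaller nonzero invariant subspace
    let U' : Submodule ℂ W := U ⊓ LinearMap.ker (T i - c • LinearMap.id)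
    have hmem : ∀ w, w ∈ U' ↔ w ∈ U ∧ T i w = c • w := by
      intro w
      simp [U', sub_eq_zero]
    have hlt : U' < U := by
      refine lt_of_le_of_ne inf_le_left fun h => ?_
      obtain ⟨w, hw, hne⟩ := hi c
      exact hne ((hmem w).1 (h ▸ hw)).2
    have hne : U' ≠ ⊥ := by
      intro h
      have h1 : (u : W) ∈ U' := (hmem _).2 ⟨u.2, congrArg Subtype.val hu.apply_eq_smul⟩
      rw [h] at h1
      exact hu.2 (Subtype.ext h1)
    obtain ⟨w, hw, h0, hw'⟩ := ih _ (hd ▸ Submodule.finrank_lt_finrank_of_lt hlt) U' hne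
      (fun j w hw => (hmem _).2 ⟨hinv j w ((hmem w).1 hw).1, by
        rw [hc, ((hmem w).1 hw).2, map_smul]⟩) rfl
    exact ⟨w, ((hmem w).1 hw).1, h0, hw'⟩

/-- Nonzero common eigenvectors with pairwise different systems of eigenvalues are linearly
independent. -/
theorem linearIndependent_of_weights {ι κ W : Type*} [AddCommGroup W] [Module ℂ W]
    (T : ι → Module.End ℂ W) (v : κ → W) (m : κ → ι → ℂ) (hm : Function.Injective m)
    (hv0 : ∀ k, v k ≠ 0) (hv : ∀ k i, T i (v k) = m k i • v k) : LinearIndependent ℂ v := by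
  classical
  rw [linearIndependent_iff']
  intro s
  induction s using Finset.induction_on with
  | empty => simp
  | insert k₀ s hk ih =>
    intro c hsum
    rw [Finset.sum_insert hk] at hsum
    have hs : ∀ k ∈ s, c k = 0 := by
      intro k hks
      obtain ⟨i, hi⟩ : ∃ i, m k i ≠ m k₀ i :=
        Function.ne_iff.1 (hm.ne (fun h => hk (h ▸ hks)))
      -- apply `T i - m k₀ i` to the relation, which kills the `k₀` term
      have h1 : ∑ k ∈ s, (c k * (m k i - m k₀ i)) • v k = 0 := by
        have h2 := congrArg (fun w => T i w - m k₀ i • w) hsum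
        simp only [map_add, map_sum, map_smul, hv, smul_add, Finset.smul_sum, map_zero,
          smul_zero, sub_zero] at h2
        rw [smul_comm (c k₀), add_sub_add_left_eq_sub, ← Finset.sum_sub_distrib] at h2
        rw [← h2]
        refine Finset.sum_congr rfl fun k _ => ?_
        module
      have h3 := ih _ h1 k hks
      exact (mul_eq_zero.1 h3).resolve_right (sub_ne_zero.2 hi)
    rw [Finset.sum_eq_zero (fun k hk => by rw [hs k hk, zero_smul]), add_zero] at hsum
    intro k hk'
    rcases Finset.mem_insert.1 hk' with rfl | h
    · exact (smul_eq_zero.1 hsum).resolve_right (hv0 _)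
    · exact hs k h

/-- If the line of `w` is stable under `B`, the set `A` is closed under conjugation and acts on `w`
through `χ`, and every element outside `B` moves the weight `χ`, then the translates of `w` by
coset representatives of `B` have different weights. Hence they are a basis of the irreducible
representation, whose dimension is the index of `B`. -/
theorem finrank_eq_index {G W : Type*} [Group G] [Finite G] [AddCommGroup W] [Module ℂ W]
    [FiniteDimensional ℂ W] (ρ : Representation ℂ G W) (hρ : Irr ρ) (B : Subgroup G)
    (w : W) (hw : w ≠ 0) (hB : ∀ b ∈ B, ∃ c : ℂ, ρ b w = c • w)
    (A : Set G) (χ : G → ℂ) (hA : ∀ x, ∀ a ∈ A, x⁻¹ * a * x ∈ A)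
    (hχ : ∀ a ∈ A, ρ a w = χ a • w)
    (hsep : ∀ x, x ∉ B → ∃ a ∈ A, χ (x⁻¹ * a * x) ≠ χ a) :
    Module.finrank ℂ W = B.index := by
  let v : G ⧸ B → W := fun q => ρ q.out w
  have hli : LinearIndependent ℂ v := by
    refine linearIndependent_of_weights (fun a : A => ρ a) v
      (fun q a => χ (q.out⁻¹ * a * q.out)) ?_ ?_ ?_
    · intro q q' h
      by_contra hne
      have h1 : q'.out⁻¹ * q.out ∉ B := by
        intro h2
        apply hne
        rw [← QuotientGroup.eq] at h2
        simpa using h2.symm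
      obtain ⟨a, ha, hne⟩ := hsep _ h1
      have ha' : q'.out * a * q'.out⁻¹ ∈ A := by simpa using hA q'.out⁻¹ a ha
      have h3 := congrFun h ⟨_, ha'⟩
      apply hne
      simp only at h3
      convert h3 using 2 <;> group
    · intro q h
      apply hw
      have := congrArg (ρ q.out⁻¹) h
      simpa [v, ← Module.End.mul_apply, ← map_mul] using this
    · rintro q ⟨a, ha⟩
      have := hχ _ (hA q.out a ha)
      simp only [v]
      rw [← map_smul, ← this, ← Module.End.mul_apply, ← Module.End.mul_apply, ← map_mul,
        ← map_mul]
      congr 2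
      group
  have hg : ∀ g, ∃ c : ℂ, ρ g w = c • v (g : G ⧸ B) := by
    intro g
    have hb : (g : G ⧸ B).out⁻¹ * g ∈ B := by
      rw [← QuotientGroup.eq]; simp
    obtain ⟨c, hc⟩ := hB _ hb
    refine ⟨c, ?_⟩
    simp only [v]
    rw [← map_smul, ← hc, ← Module.End.mul_apply, ← map_mul, mul_inv_cancel_left]
  have hspan : Submodule.span ℂ (Set.range v) = ⊤ := by
    refine (hρ.2 _ ?_).resolve_left ?_
    · intro g u hu
      induction hu using Submodule.span_induction with
      | mem u hu =>
        obtain ⟨q, rfl⟩ := hu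
        obtain ⟨c, hc⟩ := hg (g * q.out)
        rw [map_mul, Module.End.mul_apply] at hc
        rw [show ρ g (v q) = _ from hc]
        exact Submodule.smul_mem _ _ (Submodule.subset_span ⟨_, rfl⟩)
      | zero => simp
      | add a b _ _ ha hb => rw [map_add]; exact Submodule.add_mem _ ha hb
      | smul c a _ ha => rw [map_smul]; exact Submodule.smul_mem _ _ ha
    · intro h
      have h1 : v ((1 : G) : G ⧸ B) ∈ Submodule.span ℂ (Set.range v) :=
        Submodule.subset_span ⟨_, rfl⟩
      rw [h] at h1
      exact hli.ne_zero _ h1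
  have := Fintype.ofFinite (G ⧸ B)
  rw [Module.finrank_eq_card_basis (Module.Basis.mk hli hspan.ge), Subgroup.index,
    Nat.card_eq_fintype_card]

/-- If `T` has finite order and is not the identity, an eigenvector in the range of `T - 1`
has an eigenvalue other than `1`. -/
theorem apply_ne_of_mem_range {W : Type*} [AddCommGroup W] [Module ℂ W]
    (T : Module.End ℂ W) (k : ℕ) (hk : 0 < k) (hT : T ^ k = 1) (w : W) (hw : w ≠ 0)
    (hr : w ∈ LinearMap.range (T - 1)) : T w ≠ w := by
  rintro h
  obtain ⟨u, rfl⟩ := hr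
  set w := (T - 1) u with hwdef
  have h1 : ∀ j : ℕ, (T ^ j) u = u + j • w := by
    intro j
    induction j with
    | zero => simp
    | succ j ih =>
      have : T u = u + w := by simp [hwdef]
      rw [pow_succ', Module.End.mul_apply, ih, map_add, map_nsmul, h, this, succ_nsmul]
      abel
  have h2 := h1 k
  rw [hT, Module.End.one_apply, left_eq_add, ← Nat.cast_smul_eq_nsmul ℂ] at h2
  rcases smul_eq_zero.1 h2 with h3 | h3
  · exact hk.ne' (by exact_mod_cast h3)
  · exact hw h3

/-- `finrank_eq_index` with conjugation written as `x * a * x⁻¹`. -/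
theorem finrank_eq_index' {G W : Type*} [Group G] [Finite G] [AddCommGroup W] [Module ℂ W]
    [FiniteDimensional ℂ W] (ρ : Representation ℂ G W) (hρ : Irr ρ) (B : Subgroup G)
    (w : W) (hw : w ≠ 0) (hB : ∀ b ∈ B, ∃ c : ℂ, ρ b w = c • w)
    (A : Set G) (χ : G → ℂ) (hA : ∀ x, ∀ a ∈ A, x * a * x⁻¹ ∈ A)
    (hχ : ∀ a ∈ A, ρ a w = χ a • w)
    (hsep : ∀ x, x ∉ B → ∃ a ∈ A, χ (x * a * x⁻¹) ≠ χ a) :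
    Module.finrank ℂ W = B.index := by
  refine finrank_eq_index ρ hρ B w hw hB A χ (fun x a ha => by simpa using hA x⁻¹ a ha) hχ
    fun x hx => ?_
  simpa using hsep x⁻¹ (by simpa using hx)

/-! ### The Heisenberg group and its automorphisms -/

/-- The Heisenberg group on `V ⊕ V* ⊕ F`, with
`(v, f, z) (v', f', z') = (v + v', f + f', z + z' + f v')`. -/
@[ext]
structure Heis (F V : Type) [Field F] [AddCommGroup V] [Module F V] where
  /-- the component in `V` -/
  v : V
  /-- the component in the dual of `V` -/
  f : Module.Dual F V
  /-- the central component -/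
  z : F

namespace Heis

variable {F V : Type} [Field F] [AddCommGroup V] [Module F V]

instance : Group (Heis F V) where
  mul a b := ⟨a.v + b.v, a.f + b.f, a.z + b.z + a.f b.v⟩
  one := ⟨0, 0, 0⟩
  inv a := ⟨-a.v, -a.f, -a.z + a.f a.v⟩
  mul_assoc a b c := by
    change Heis.mk _ _ _ = Heis.mk _ _ _
    congr 1
    · exact add_assoc _ _ _
    · exact add_assoc _ _ _
    · change a.z + b.z + a.f b.v + c.z + (a.f + b.f) c.v
        = a.z + (b.z + c.z + b.f c.v) + a.f (b.v + c.v)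
      rw [map_add, LinearMap.add_apply]
      ring
  one_mul a := by
    change Heis.mk _ _ _ = _
    ext1
    · exact zero_add _
    · exact zero_add _
    · change 0 + a.z + (0 : Module.Dual F V) a.v = a.z
      simp
  mul_one a := by
    change Heis.mk _ _ _ = _
    ext1
    · exact add_zero _
    · exact add_zero _
    · change a.z + 0 + a.f 0 = a.z
      simp
  inv_mul_cancel a := by
    change Heis.mk _ _ _ = Heis.mk _ _ _
    congr 1
    · exact neg_add_cancel _
    · exact neg_add_cancel _
    · change -a.z + a.f a.v + a.z + (-a.f) a.v = 0
      rw [LinearMap.neg_apply]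
      ring

theorem mul_def (a b : Heis F V) :
    a * b = ⟨a.v + b.v, a.f + b.f, a.z + b.z + a.f b.v⟩ := rfl
theorem one_def : (1 : Heis F V) = ⟨0, 0, 0⟩ := rfl
theorem inv_def (a : Heis F V) : a⁻¹ = ⟨-a.v, -a.f, -a.z + a.f a.v⟩ := rfl
@[simp] theorem mul_v (a b : Heis F V) : (a * b).v = a.v + b.v := rfl
@[simp] theorem mul_f (a b : Heis F V) : (a * b).f = a.f + b.f := rfl
@[simp] theorem mul_z (a b : Heis F V) : (a * b).z = a.z + b.z + a.f b.v := rfl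
@[simp] theorem one_v : (1 : Heis F V).v = 0 := rfl
@[simp] theorem one_f : (1 : Heis F V).f = 0 := rfl
@[simp] theorem one_z : (1 : Heis F V).z = 0 := rfl
@[simp] theorem inv_v (a : Heis F V) : (a⁻¹).v = -a.v := rfl
@[simp] theorem inv_f (a : Heis F V) : (a⁻¹).f = -a.f := rfl
@[simp] theorem inv_z (a : Heis F V) : (a⁻¹).z = -a.z + a.f a.v := rfl

theorem conj_eq (e a : Heis F V) :
    e * a * e⁻¹ = ⟨a.v, a.f, a.z + e.f a.v - a.f e.v⟩ := by
  ext1 <;> simp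
  ring

/-- The underlying set of the Heisenberg group. -/
def equivProd : Heis F V ≃ V × Module.Dual F V × F where
  toFun a := (a.v, a.f, a.z)
  invFun a := ⟨a.1, a.2.1, a.2.2⟩

instance [Finite F] [FiniteDimensional F V] : Finite (Heis F V) :=
  have : Finite V := Module.finite_of_finite F
  have : Finite (Module.Dual F V) := Module.finite_of_finite F
  Finite.of_equiv _ equivProd.symm

theorem card_eq [Finite F] [FiniteDimensional F V] :
    Nat.card (Heis F V) = Nat.card F ^ (2 * Module.finrank F V + 1) := by
  rw [Nat.card_congr equivProd, Nat.card_prod, Nat.card_prod,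
    Module.natCard_eq_pow_finrank (K := F) (V := V),
    Module.natCard_eq_pow_finrank (K := F) (V := Module.Dual F V), Subspace.dual_finrank_eq]
  ring

variable {P C : Type} [CommGroup P] [CommGroup C] [DistribMulAction P V] [SMulCommClass P F V]

/-- The linear map `v ↦ l(s) • g • v` by which `(g, s)` acts on `V`. -/
def actV (l : C →* Fˣ) (h : P × C) : V →ₗ[F] V :=
  (l h.2 : F) • DistribSMul.toLinearMap F V h.1

theorem actV_apply (l : C →* Fˣ) (h : P × C) (v : V) :
    actV l h v = (l h.2 : F) • h.1 • v := rfl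

/-- The linear map `f ↦ l(s) • f ∘ g⁻¹` by which `(g, s)` acts on the dual of `V`. -/
def actD (l : C →* Fˣ) (h : P × C) : Module.Dual F V →ₗ[F] Module.Dual F V :=
  (actV l (h.1⁻¹, h.2)).dualMap

theorem actD_apply (l : C →* Fˣ) (h : P × C) (f : Module.Dual F V) (v : V) :
    actD l h f v = f (actV l (h.1⁻¹, h.2) v) := rfl

theorem actV_mul (l : C →* Fˣ) (h k : P × C) (v : V) :
    actV l (h * k) v = actV l h (actV l k v) := by
  simp only [actV_apply, Prod.fst_mul, Prod.snd_mul, map_mul, Units.val_mul, mul_smul]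
  rw [smul_comm h.1 (l k.2 : F)]

theorem actV_one (l : C →* Fˣ) (v : V) : actV (P := P) l 1 v = v := by
  simp [actV_apply]

/-- The pairing of `V*` with `V` is multiplied by `l(s)²`, which is the action on the centre. -/
theorem actD_actV (l : C →* Fˣ) (h : P × C) (f : Module.Dual F V) (v : V) :
    actD l h f (actV l h v) = (l h.2 : F) ^ 2 * f v := by
  rw [actD_apply, ← actV_mul, actV_apply]
  simp [← pow_two]

theorem actD_mul (l : C →* Fˣ) (h k : P × C) (f : Module.Dual F V) :
    actD l (h * k) f = actD l h (actD l k f) := by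
  ext v
  simp only [actD_apply]
  rw [← actV_mul, mul_comm h k]
  simp [mul_comm]

theorem actD_one (l : C →* Fˣ) (f : Module.Dual F V) : actD (P := P) l 1 f = f := by
  ext v
  rw [actD_apply]
  rw [show ((1 : P × C).1⁻¹, (1 : P × C).2) = 1 by simp, actV_one]

/-- The element `(g, s)` acts on the Heisenberg group by
`(v, f, z) ↦ (l(s) g v, l(s) f ∘ g⁻¹, l(s)² z)`. -/
def actFun (l : C →* Fˣ) (h : P × C) (a : Heis F V) : Heis F V :=
  ⟨actV l h a.v, actD l h a.f, (l h.2 : F) ^ 2 * a.z⟩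

theorem actFun_comp (l : C →* Fˣ) (h k : P × C) (a : Heis F V) :
    actFun l (h * k) a = actFun l h (actFun l k a) := by
  ext1
  · exact actV_mul l h k _
  · exact actD_mul l h k _
  · simp [actFun, mul_pow, mul_assoc]

theorem actFun_one (l : C →* Fˣ) (a : Heis F V) : actFun (P := P) l 1 a = a := by
  ext1
  · exact actV_one l _
  · exact actD_one l _
  · simp [actFun]

theorem actFun_mul (l : C →* Fˣ) (h : P × C) (a b : Heis F V) :
    actFun l h (a * b) = actFun l h a * actFun l h b := by
  ext1
  · exact map_add _ _ _
  · exact map_add _ _ _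
  · simp [actFun, actD_actV]
    ring

/-- The action `actFun` as a homomorphism to the automorphism group. -/
def act (l : C →* Fˣ) : P × C →* MulAut (Heis F V) where
  toFun h :=
    { toFun := actFun l h
      invFun := actFun l h⁻¹
      left_inv := fun a => by rw [← actFun_comp, inv_mul_cancel, actFun_one]
      right_inv := fun a => by rw [← actFun_comp, mul_inv_cancel, actFun_one]
      map_mul' := actFun_mul l h }
  map_one' := by ext1 a; exact actFun_one l a
  map_mul' h k := by ext1 a; exact actFun_comp l h k a

theorem act_apply (l : C →* Fˣ) (h : P × C) (a : Heis F V) :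
    act l h a = ⟨actV l h a.v, actD l h a.f, (l h.2 : F) ^ 2 * a.z⟩ := rfl

theorem exists_dual_eq {v : V} (hv : v ≠ 0) (c : F) : ∃ f : Module.Dual F V, f v = c := by
  obtain ⟨f, hf⟩ := Module.Projective.exists_dual_eq_one F hv
  exact ⟨c • f, by simp [hf]⟩

theorem exists_vec_eq {f : Module.Dual F V} (hf : f ≠ 0) (c : F) : ∃ v : V, f v = c :=
  LinearMap.surjective hf c

theorem mem_center_iff (a : Heis F V) : a ∈ Subgroup.center (Heis F V) ↔ a.v = 0 ∧ a.f = 0 := by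
  rw [Subgroup.mem_center_iff]
  constructor
  · intro h
    constructor
    · by_contra hv
      obtain ⟨f, hf⟩ := exists_dual_eq hv (1 : F)
      have := congrArg Heis.z (h ⟨0, f, 0⟩)
      simp [hf] at this
    · ext v
      have := congrArg Heis.z (h ⟨v, 0, 0⟩)
      simpa using this.symm
  · rintro ⟨h1, h2⟩ b
    ext1 <;> simp [h1, h2, add_comm]

open scoped commutatorElement in
theorem commutator_eq_center [Nontrivial V] :
    commutator (Heis F V) = Subgroup.center (Heis F V) := by
  apply le_antisymm
  · rw [commutator_def, Subgroup.commutator_le]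
    intro a _ b _
    rw [mem_center_iff]
    simp [commutatorElement_def]
  · intro a ha
    rw [mem_center_iff] at ha
    obtain ⟨v, hv⟩ := exists_ne (0 : V)
    obtain ⟨f, hf⟩ := exists_dual_eq hv a.z
    have : a = ⁅(⟨0, f, 0⟩ : Heis F V), ⟨v, 0, 0⟩⁆ := by
      rw [commutatorElement_def]
      ext1 <;> simp [ha.1, ha.2, hf]
    rw [this, commutator_def]
    exact Subgroup.commutator_mem_commutator trivial trivial

theorem card_center : Nat.card (Subgroup.center (Heis F V)) = Nat.card F := by
  refine Nat.card_congr
    { toFun := fun a => a.1.z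
      invFun := fun z => ⟨⟨0, 0, z⟩, by rw [mem_center_iff]; simp⟩
      left_inv := ?_
      right_inv := fun z => rfl }
  rintro ⟨a, ha⟩
  rw [mem_center_iff] at ha
  apply Subtype.ext
  ext1
  · exact ha.1.symm
  · exact ha.2.symm
  · rfl

end Heis

/-! ### Representations that are trivial on the centre -/

/-- The eigenvalues of a representation on a stable line form a character. -/
theorem exists_weight {K W : Type*} [Group K] [AddCommGroup W] [Module ℂ W]
    (σ : K →* Module.End ℂ W) (w : W) (hw : w ≠ 0) (h : ∀ k, ∃ c : ℂ, σ k w = c • w) :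
    ∃ χ : K →* ℂ, ∀ k, σ k w = χ k • w := by
  choose c hc using h
  refine ⟨⟨⟨c, ?_⟩, ?_⟩, hc⟩
  · have := hc 1
    rw [map_one, Module.End.one_apply] at this
    exact (smul_left_injective ℂ hw (by simpa using this)).symm
  · intro k k'
    apply smul_left_injective ℂ hw
    change c (k * k') • w = (c k * c k') • w
    rw [← hc, map_mul, Module.End.mul_apply, hc, map_smul, hc, smul_smul, mul_comm]

set_option linter.unusedSectionVars false

namespace Heis

variable {p : ℕ} [Fact p.Prime] {V P C : Type} [AddCommGroup V] [Module (ZMod p) V]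
  [FiniteDimensional (ZMod p) V]
  [CommGroup P] [CommGroup C] [Finite P] [Finite C] [DistribMulAction P V]
  [SMulCommClass P (ZMod p) V]
  {l : C →* (ZMod p)ˣ}

/-- Every nontrivial element of `P × C` acts on `V` without nonzero fixed points. -/
def IsFree (V P : Type) {C : Type} [AddCommGroup V] [Module (ZMod p) V] [CommGroup P]
    [CommGroup C] [DistribMulAction P V] [SMulCommClass P (ZMod p) V]
    (l : C →* (ZMod p)ˣ) : Prop :=
  ∀ h : P × C, h ≠ 1 → ∀ v : V, actV l h v = v → v = 0

instance : Finite (Heis (ZMod p) V ⋊[act (P := P) l] (P × C)) :=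
  Finite.of_equiv _ SemidirectProduct.equivProd.symm

/-- On a finite-dimensional space, `h - 1` is surjective as soon as it is injective. -/
theorem surjV (hf : IsFree V P l) {h : P × C} (hh : h ≠ 1) (v₀ : V) :
    ∃ v, actV l h v - v = v₀ := by
  have hinj : Function.Injective (actV l h - LinearMap.id : V →ₗ[ZMod p] V) := by
    rw [injective_iff_map_eq_zero]
    intro v hv
    exact hf h hh v (sub_eq_zero.1 hv)
  exact LinearMap.surjective_of_injective hinj v₀

theorem surjD (hf : IsFree V P l) {h : P × C} (hh : h ≠ 1) (f₀ : Module.Dual (ZMod p) V) :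
    ∃ f, actD l h f - f = f₀ := by
  have hinj : Function.Injective (actD l h - LinearMap.id :
      Module.Dual (ZMod p) V →ₗ[ZMod p] Module.Dual (ZMod p) V) := by
    rw [injective_iff_map_eq_zero]
    intro f hff
    ext v₀
    have hh' : (h.1⁻¹, h.2) ≠ 1 := by
      intro h1
      apply hh
      simpa [Prod.ext_iff] using h1
    obtain ⟨v, hv⟩ := surjV hf hh' v₀
    have := LinearMap.congr_fun hff v
    rw [← hv, map_sub]
    exact this
  exact LinearMap.surjective_of_injective hinj f₀

open SemidirectProduct

/-- The conjugation action of `G` on the Heisenberg group. -/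
theorem conj_inl (x : Heis (ZMod p) V ⋊[act (P := P) l] (P × C)) (a : Heis (ZMod p) V) :
    x * inl a * x⁻¹ = inl ⟨actV l x.right a.v, actD l x.right a.f,
      (l x.right.2 : ZMod p) ^ 2 * a.z + x.left.f (actV l x.right a.v)
        - actD l x.right a.f x.left.v⟩ := by
  obtain ⟨e, h⟩ := x
  have h1 : (⟨e, h⟩ : Heis (ZMod p) V ⋊[act (P := P) l] (P × C)) = inl e * inr h := by
    ext1 <;> simp
  have h2 := inl_aut (φ := act (P := P) l) h a
  rw [act_apply] at h2
  have h3 := conj_eq e ⟨actV l h a.v, actD l h a.f, (l h.2 : ZMod p) ^ 2 * a.z⟩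
  simp only at h3 ⊢
  rw [← h3, map_mul, map_mul, h2, map_inv, h1, map_inv]
  group

theorem inl_comm (a b : Heis (ZMod p) V) :
    (inl a * inl b : Heis (ZMod p) V ⋊[act (P := P) l] (P × C))
      = inl b * inl a * inl ⟨0, 0, a.f b.v - b.f a.v⟩ := by
  rw [← map_mul, ← map_mul, ← map_mul]
  congr 1
  ext1 <;> simp
  · rw [add_comm]
  · rw [add_comm]
  · ring

variable {W : Type} [AddCommGroup W] [Module ℂ W] [FiniteDimensional ℂ W]

/-- An irreducible representation that is trivial on the Heisenberg group factors through the
abelian group `P × C`, hence has dimension `1`. -/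
theorem finrank_of_trivial
    (ρ : Representation ℂ (Heis (ZMod p) V ⋊[act (P := P) l] (P × C)) W) (hρ : Irr ρ)
    (hE : ∀ a, ρ (inl a) = 1) : Module.finrank ℂ W = 1 := by
  have hr : ∀ x, ρ x = ρ (inr x.right) := by
    intro x
    conv_lhs => rw [← inl_left_mul_inr_right x]
    rw [map_mul, hE, one_mul]
  have := hρ.1
  obtain ⟨w, -, hw, hw'⟩ := exists_common_eigenvector (fun x => ρ x)
    (fun x y w => by
      rw [hr x, hr y, ← Module.End.mul_apply, ← Module.End.mul_apply, ← map_mul, ← map_mul,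
        ← map_mul, ← map_mul, mul_comm]) ⊤ top_ne_bot (fun _ _ _ => trivial)
  have h := finrank_eq_index' ρ hρ ⊤ w hw (fun b _ => hw' b) ∅ 1
    (by simp) (by simp) (by simp)
  rwa [Subgroup.index_top] at h

theorem range_sub_one_ne_bot {T : Module.End ℂ W} (h : T ≠ 1) :
    LinearMap.range (T - 1) ≠ ⊥ := by
  rw [Ne, LinearMap.range_eq_bot, sub_eq_zero]
  exact h

theorem range_inv {T S : Module.End ℂ W} (h : S * T = T * S) (w : W)
    (hw : w ∈ LinearMap.range (T - 1)) : S w ∈ LinearMap.range (T - 1) := by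
  obtain ⟨u, rfl⟩ := hw
  refine ⟨S u, ?_⟩
  rw [← Module.End.mul_apply, ← Module.End.mul_apply]
  congr 1
  rw [sub_mul, mul_sub, h, mul_one, one_mul]

/-- If the centre acts trivially, the Heisenberg group acts through commuting operators, and a
nontrivial weight is fixed by no nontrivial element of `P × C`, because that group acts freely
on `V` and `V*`. So the representation is induced from the Heisenberg group. -/
theorem finrank_of_central_trivial (hf : IsFree V P l)
    (ρ : Representation ℂ (Heis (ZMod p) V ⋊[act (P := P) l] (P × C)) W) (hρ : Irr ρ)
    (hZ : ∀ z, ρ (inl ⟨0, 0, z⟩) = 1) (e₀ : Heis (ZMod p) V) (he₀ : ρ (inl e₀) ≠ 1) :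
    Module.finrank ℂ W = Nat.card P * Nat.card C := by
  have hcomm : ∀ a b, ρ (inl a) * ρ (inl b) = ρ (inl b) * ρ (inl a) := by
    intro a b
    rw [← map_mul, inl_comm, map_mul, hZ, mul_one, map_mul]
  obtain ⟨w, hwr, hw, hw'⟩ := exists_common_eigenvector (fun a => ρ (inl a))
    (fun x y w => LinearMap.congr_fun (hcomm x y) w)
    (LinearMap.range (ρ (inl e₀) - 1)) (range_sub_one_ne_bot he₀)
    (fun a w hw => range_inv (hcomm _ _) w hw)
  have hne := apply_ne_of_mem_range _ _ (orderOf_pos (inl e₀))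
    (by rw [← map_pow, pow_orderOf_eq_one, map_one]) w hw hwr
  obtain ⟨χ, hχ⟩ := exists_weight (ρ.comp inl) w hw hw'
  replace hχ : ∀ a, ρ (inl a) w = χ a • w := hχ
  have hχz : ∀ z, χ ⟨0, 0, z⟩ = 1 := by
    intro z
    have := hχ ⟨0, 0, z⟩
    rw [hZ, Module.End.one_apply] at this
    exact (smul_left_injective ℂ hw (by simpa using this)).symm
  have hχe : χ e₀ ≠ 1 := by
    intro h
    rw [hχ, h, one_smul] at hne
    exact hne rfl
  have hidx : (inl : _ →* Heis (ZMod p) V ⋊[act (P := P) l] (P × C)).range.index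
      = Nat.card P * Nat.card C := by
    rw [range_inl_eq_ker_rightHom, Subgroup.index_ker,
      MonoidHom.range_eq_top.2 rightHom_surjective, Subgroup.card_top, Nat.card_prod]
  rw [← hidx]
  refine finrank_eq_index' ρ hρ _ w hw ?_ (Set.range inl) (fun x => χ x.left) ?_ ?_ ?_
  · rintro _ ⟨a, rfl⟩
    exact hw' a
  · rintro x _ ⟨a, rfl⟩
    exact ⟨_, (conj_inl x a).symm⟩
  · rintro _ ⟨a, rfl⟩
    exact hχ a
  · intro x hx
    have hx' : x.right ≠ 1 := by
      intro h
      exact hx ⟨x.left, by ext1 <;> simp [h]⟩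
    obtain ⟨v, hv⟩ := surjV hf hx' e₀.v
    obtain ⟨f, hff⟩ := surjD hf hx' e₀.f
    refine ⟨inl ⟨v, f, 0⟩, ⟨_, rfl⟩, ?_⟩
    rw [conj_inl]
    simp only [left_inl]
    intro h
    -- modulo the centre, the conjugate is `e₀` times the original element
    set a : Heis (ZMod p) V := ⟨v, f, 0⟩
    have h1 : ∀ z, χ ⟨actV l x.right v, actD l x.right f, z⟩ = χ e₀ * χ a := by
      intro z
      rw [← map_mul, ← mul_one (χ (e₀ * a)), ← hχz (z - (e₀ * a).z), ← map_mul]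
      congr 1
      ext1
      · simp [a, ← hv]
      · simp [a, ← hff]
      · simp
    rw [h1] at h
    have h2 : χ a ≠ 0 := by
      intro h0
      have := map_mul χ a a⁻¹
      rw [mul_inv_cancel, map_one, h0, zero_mul] at this
      exact one_ne_zero this
    exact hχe (mul_eq_right₀ h2 |>.1 h)

/-! ### Representations that are nontrivial on the centre -/

theorem addChar_ne_zero {A : Type*} [AddGroup A] (ψ : AddChar A ℂ) (x : A) : ψ x ≠ 0 := by
  intro h
  have := AddChar.map_add_eq_mul ψ x (-x)
  rw [add_neg_cancel, AddChar.map_zero_eq_one, h, zero_mul] at this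
  exact one_ne_zero this

/-- For a nontrivial additive character `ψ` of the base field, every character of the dual space
is of the form `f ↦ ψ (f v)`. -/
theorem exists_char_eq (ψ : AddChar (ZMod p) ℂ) (hψ : ∃ z, ψ z ≠ 1)
    (α : AddChar (Module.Dual (ZMod p) V) ℂ) : ∃ v : V, ∀ f, ψ (f v) = α f := by
  have : Finite V := Module.finite_of_finite (ZMod p)
  have : Finite (Module.Dual (ZMod p) V) := Module.finite_of_finite (ZMod p)
  let Φ : V → AddChar (Module.Dual (ZMod p) V) ℂ := fun v =>
    ψ.compAddMonoidHom (Module.Dual.eval (ZMod p) V v).toAddMonoidHom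
  have hΦ : ∀ v f, Φ v f = ψ (f v) := fun v f => rfl
  have hinj : Function.Injective Φ := by
    intro v v' h
    by_contra hne
    obtain ⟨z, hz⟩ := hψ
    obtain ⟨f, hf⟩ := exists_dual_eq (sub_ne_zero.2 hne) z
    have h1 := DFunLike.congr_fun h f
    rw [hΦ, hΦ] at h1
    rw [map_sub] at hf
    rw [← hf, AddChar.map_sub_eq_div, h1, div_self] at hz
    · exact hz rfl
    · exact addChar_ne_zero ψ _
  have hcard : Nat.card V = Nat.card (AddChar (Module.Dual (ZMod p) V) ℂ) := by
    have := Fintype.ofFinite (Module.Dual (ZMod p) V)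
    have h := AddChar.card_eq (α := Module.Dual (ZMod p) V)
    rw [← Nat.card_eq_fintype_card, ← Nat.card_eq_fintype_card] at h
    rw [h,
      Module.natCard_eq_pow_finrank (K := ZMod p) (V := V),
      Module.natCard_eq_pow_finrank (K := ZMod p) (V := Module.Dual (ZMod p) V),
      Subspace.dual_finrank_eq]
  have hbij := (Nat.bijective_iff_injective_and_card Φ).2 ⟨hinj, hcard⟩
  obtain ⟨v, hv⟩ := hbij.2 α
  exact ⟨v, fun f => by rw [← hv, hΦ]⟩

/-- The subgroup `V* × F × P` of `G`, over which the representations that are faithful on the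
centre of the Heisenberg group are monomial. -/
def polar (V P : Type) {C : Type} [AddCommGroup V] [Module (ZMod p) V] [CommGroup P]
    [CommGroup C] [DistribMulAction P V] [SMulCommClass P (ZMod p) V] (l : C →* (ZMod p)ˣ) :
    Subgroup (Heis (ZMod p) V ⋊[act (P := P) l] (P × C)) where
  carrier := {x | x.left.v = 0 ∧ x.right.2 = 1}
  one_mem' := ⟨rfl, rfl⟩
  mul_mem' := by
    rintro x y ⟨hx, hx'⟩ ⟨hy, hy'⟩
    constructor
    · simp [act_apply, hx, hy]
    · simp [hx', hy']
  inv_mem' := by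
    rintro x ⟨hx, hx'⟩
    constructor
    · change (act l x.right⁻¹ x.left⁻¹).v = 0
      rw [act_apply]
      simp [hx]
    · simp [hx']

theorem index_polar : (polar V P l).index = Nat.card C * p ^ Module.finrank (ZMod p) V := by
  have : Finite V := Module.finite_of_finite (ZMod p)
  have : Finite (Module.Dual (ZMod p) V) := Module.finite_of_finite (ZMod p)
  have h1 := (polar V P l).card_mul_index
  have h2 : Nat.card (polar V P l) = Nat.card (Module.Dual (ZMod p) V × ZMod p × P) := by
    refine Nat.card_congr
      { toFun := fun x => (x.1.left.f, x.1.left.z, x.1.right.1)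
        invFun := fun y => ⟨⟨⟨0, y.1, y.2.1⟩, (y.2.2, 1)⟩, rfl, rfl⟩
        left_inv := ?_
        right_inv := fun _ => rfl }
    rintro ⟨⟨⟨v, f, z⟩, ⟨g, s⟩⟩, hx, hx'⟩
    simp only at hx hx'
    subst hx hx'
    rfl
  rw [h2, SemidirectProduct.card, Nat.card_congr equivProd] at h1
  simp only [Nat.card_prod, Nat.card_zmod] at h1
  have hV : p ^ Module.finrank (ZMod p) V = Nat.card V := by
    rw [Module.natCard_eq_pow_finrank (K := ZMod p) (V := V), Nat.card_zmod]
  rw [hV]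
  have h3 : 0 < Nat.card (Module.Dual (ZMod p) V) * (p * Nat.card P) :=
    Nat.mul_pos Nat.card_pos (Nat.mul_pos (Fact.out : p.Prime).pos Nat.card_pos)
  apply Nat.eq_of_mul_eq_mul_left h3
  rw [h1]
  ring

/-- If `z₀` in the centre acts nontrivially, there is a common eigenvector for `V* × F × P` on
which `V*` acts trivially and the centre by a nontrivial character `ψ`: a weight of `V*` has the
form `f ↦ ψ (- f v)`, and translating by `v` makes it trivial. The stabiliser of this weight is
`polar`, since an element with nonzero `V`-component changes the weight on `V*`, and one with
nontrivial component in `C` changes `ψ`. -/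
theorem finrank_of_central_nontrivial (hl : ∀ s, s ≠ 1 → (l s : ZMod p) ^ 2 ≠ 1)
    (ρ : Representation ℂ (Heis (ZMod p) V ⋊[act (P := P) l] (P × C)) W) (hρ : Irr ρ)
    (z₀ : ZMod p) (hz₀ : ρ (inl ⟨0, 0, z₀⟩) ≠ 1) :
    Module.finrank ℂ W = Nat.card C * p ^ Module.finrank (ZMod p) V := by
  rw [← index_polar (P := P) (l := l)]
  let zH : Multiplicative (ZMod p) →* Heis (ZMod p) V :=
    { toFun := fun z => ⟨0, 0, z.toAdd⟩
      map_one' := rfl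
      map_mul' := fun a b => by ext1 <;> simp }
  let fH : Multiplicative (Module.Dual (ZMod p) V) →* Heis (ZMod p) V :=
    { toFun := fun f => ⟨0, f.toAdd, 0⟩
      map_one' := rfl
      map_mul' := fun a b => by ext1 <;> simp }
  -- the part of `W` on which `z₀` acts without fixed vectors
  set R := LinearMap.range (ρ (inl ⟨0, 0, z₀⟩) - 1) with hR
  have hR0 : R ≠ ⊥ := range_sub_one_ne_bot hz₀
  have hRinv : ∀ x, x * inl ⟨0, 0, z₀⟩ = inl ⟨0, 0, z₀⟩ * x → ∀ w ∈ R, ρ x w ∈ R := by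
    intro x hx w hw
    exact range_inv (by rw [← map_mul, hx, map_mul]) w hw
  have hRinl : ∀ a, ∀ w ∈ R, ρ (inl a) w ∈ R := by
    intro a
    apply hRinv
    rw [inl_comm, ← map_mul, ← map_mul]
    congr 1
    ext1 <;> simp
  have hRne : ∀ w ∈ R, w ≠ 0 → ρ (inl ⟨0, 0, z₀⟩) w ≠ w := by
    intro w hwr hw
    exact apply_ne_of_mem_range _ _ (orderOf_pos
      (inl ⟨0, 0, z₀⟩ : Heis (ZMod p) V ⋊[act (P := P) l] (P × C)))
      (by rw [← map_pow, pow_orderOf_eq_one, map_one]) w hw hwr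
  have hweight : ∀ w ∈ R, w ≠ 0 → (∀ z, ∃ c : ℂ, ρ (inl ⟨0, 0, z⟩) w = c • w) →
      ∃ ψ : AddChar (ZMod p) ℂ, (∀ z, ρ (inl ⟨0, 0, z⟩) w = ψ z • w) ∧ ψ z₀ ≠ 1 := by
    intro w hwr hw hw'
    obtain ⟨χ, hχ⟩ := exists_weight ((ρ.comp inl).comp zH) w hw (fun k => hw' k.toAdd)
    refine ⟨AddChar.toMonoidHomEquiv.symm χ, fun z => hχ (Multiplicative.ofAdd z), ?_⟩
    intro h
    have h1 : ρ (inl ⟨0, 0, z₀⟩) w = AddChar.toMonoidHomEquiv.symm χ z₀ • w :=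
      hχ (Multiplicative.ofAdd z₀)
    rw [h, one_smul] at h1
    exact hRne w hwr hw h1
  -- a nonzero vector of `R` fixed by `V*`
  obtain ⟨w₁, hw₁R, hw₁, hw₁f⟩ : ∃ w ∈ R, w ≠ 0 ∧ ∀ f, ρ (inl ⟨0, f, 0⟩) w = w := by
    obtain ⟨w, hwr, hw, hw'⟩ := exists_common_eigenvector
      (fun a : Module.Dual (ZMod p) V × ZMod p => ρ (inl ⟨0, a.1, a.2⟩))
      (fun x y w => by
        rw [← Module.End.mul_apply, ← Module.End.mul_apply, ← map_mul ρ, ← map_mul ρ,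
          ← map_mul inl, ← map_mul inl]
        congr 3
        ext1 <;> simp [add_comm])
      R hR0 (fun a w hw => hRinl _ w hw)
    obtain ⟨ψ, hψ, hψ0⟩ := hweight w hwr hw (fun z => hw' (0, z))
    obtain ⟨χ, hχ⟩ := exists_weight ((ρ.comp inl).comp fH) w hw (fun k => hw' (k.toAdd, 0))
    let α : AddChar (Module.Dual (ZMod p) V) ℂ := AddChar.toMonoidHomEquiv.symm χ
    have hα : ∀ f, ρ (inl ⟨0, f, 0⟩) w = α f • w := fun f => hχ (Multiplicative.ofAdd f)
    obtain ⟨v, hv⟩ := exists_char_eq ψ ⟨_, hψ0⟩ α⁻¹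
    refine ⟨ρ (inl ⟨v, 0, 0⟩) w, hRinl _ w hwr, ?_, ?_⟩
    · intro h
      apply hw
      have h1 := congrArg (ρ (inl ⟨v, 0, 0⟩)⁻¹) h
      rwa [← Module.End.mul_apply, ← map_mul, inv_mul_cancel, map_one, map_zero] at h1
    · intro f
      have h1 : (⟨0, f, 0⟩ : Heis (ZMod p) V) * ⟨v, 0, 0⟩
          = ⟨v, 0, 0⟩ * ⟨0, 0, f v⟩ * ⟨0, f, 0⟩ := by
        ext1 <;> simp
      rw [← Module.End.mul_apply, ← map_mul, ← map_mul, h1, map_mul, map_mul, map_mul, map_mul,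
        Module.End.mul_apply, Module.End.mul_apply, hα, map_smul, hψ, map_smul, map_smul,
        smul_smul, hv, AddChar.inv_apply', mul_inv_cancel₀ (addChar_ne_zero α _), one_smul]
  -- a vector which is moreover an eigenvector of `P`
  have hmulx : ∀ (z : ZMod p) (g : P) (f : Module.Dual (ZMod p) V),
      (inl ⟨0, f, 0⟩ * ⟨⟨0, 0, z⟩, (g, 1)⟩ : Heis (ZMod p) V ⋊[act (P := P) l] (P × C))
        = ⟨⟨0, 0, z⟩, (g, 1)⟩ * inl ⟨0, actD l ((g, 1) : P × C)⁻¹ f, 0⟩ := by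
    intro z g f
    ext1
    · ext1 <;> simp [act_apply, ← actD_mul, -Prod.mk_mul_mk, -Prod.inv_mk, actD_one]
    · simp
  obtain ⟨w, hwU, hw, hw'⟩ := exists_common_eigenvector
    (fun a : ZMod p × P => ρ ⟨⟨0, 0, a.1⟩, (a.2, 1)⟩)
    (fun x y w => by
      rw [← Module.End.mul_apply, ← Module.End.mul_apply, ← map_mul, ← map_mul]
      congr 2
      ext1
      · ext1 <;> simp [act_apply, add_comm]
      · simp [mul_comm])
    (R ⊓ ⨅ f, LinearMap.ker (ρ (inl ⟨0, f, 0⟩) - 1))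
    (by
      intro h
      have h1 : w₁ ∈ R ⊓ ⨅ f, LinearMap.ker (ρ (inl ⟨0, f, 0⟩) - 1) := by
        simp [hw₁R, hw₁f]
      rw [h] at h1
      exact hw₁ h1)
    (by
      rintro ⟨z, g⟩ w ⟨hw, hw'⟩
      simp only [SetLike.mem_coe, Submodule.mem_iInf, LinearMap.mem_ker, LinearMap.sub_apply,
        Module.End.one_apply, sub_eq_zero] at hw'
      refine ⟨hRinv _ ?_ w hw, ?_⟩
      · ext1
        · ext1 <;> simp [act_apply, add_comm]
        · simp
      · simp only [SetLike.mem_coe, Submodule.mem_iInf, LinearMap.mem_ker, LinearMap.sub_apply,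
          Module.End.one_apply, sub_eq_zero]
        intro f
        rw [← Module.End.mul_apply, ← map_mul, hmulx, map_mul, Module.End.mul_apply, hw'])
  obtain ⟨hwR, hwf⟩ := hwU
  simp only [SetLike.mem_coe, Submodule.mem_iInf, LinearMap.mem_ker, LinearMap.sub_apply,
    Module.End.one_apply, sub_eq_zero] at hwf
  obtain ⟨ψ, hψ, hψ0⟩ := hweight w hwR hw (fun z => hw' (z, 1))
  have hA : ∀ f z, ρ (inl ⟨0, f, z⟩) w = ψ z • w := by
    intro f z
    have h1 : (⟨0, f, z⟩ : Heis (ZMod p) V) = ⟨0, 0, z⟩ * ⟨0, f, 0⟩ := by ext1 <;> simp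
    rw [h1, map_mul, map_mul, Module.End.mul_apply, hwf, hψ]
  refine finrank_eq_index' ρ hρ _ w hw ?_ (inl '' {a | a.v = 0}) (fun x => ψ x.left.z) ?_ ?_ ?_
  · rintro ⟨⟨v, f, z⟩, ⟨g, s⟩⟩ ⟨hx, hx'⟩
    simp only at hx hx'
    subst hx hx'
    have h1 : (⟨⟨0, f, z⟩, (g, 1)⟩ : Heis (ZMod p) V ⋊[act (P := P) l] (P × C))
        = inl ⟨0, f, 0⟩ * ⟨⟨0, 0, z⟩, (g, 1)⟩ := by
      ext1
      · ext1 <;> simp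
      · simp
    obtain ⟨c, hc⟩ := hw' (z, g)
    exact ⟨c, by rw [h1, map_mul, Module.End.mul_apply, hc, map_smul, hwf]⟩
  · rintro x _ ⟨a, ha, rfl⟩
    have ha : a.v = 0 := ha
    rw [conj_inl]
    exact ⟨_, by simp [ha], rfl⟩
  · rintro _ ⟨⟨v, f, z⟩, ha, rfl⟩
    have ha : v = 0 := ha
    subst ha
    exact hA f z
  · rintro x hx
    by_cases hs : x.right.2 = 1
    · have hv : x.left.v ≠ 0 := fun h => hx ⟨h, hs⟩
      have hu : actV l (x.right.1⁻¹, x.right.2) x.left.v ≠ 0 := by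
        simpa [actV_apply, hs, smul_eq_zero_iff_eq] using hv
      obtain ⟨f, hf⟩ := exists_dual_eq hu (-z₀)
      refine ⟨inl ⟨0, f, 0⟩, ⟨_, rfl, rfl⟩, ?_⟩
      rw [conj_inl]
      simpa [actD_apply, hf] using hψ0
    · have h2 := sub_ne_zero.2 (hl _ hs)
      refine ⟨inl ⟨0, 0, z₀ / ((l x.right.2 : ZMod p) ^ 2 - 1)⟩, ⟨_, rfl, rfl⟩, ?_⟩
      rw [conj_inl]
      set z := z₀ / ((l x.right.2 : ZMod p) ^ 2 - 1) with hz
      have h3 : (l x.right.2 : ZMod p) ^ 2 * z = z + z₀ := by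
        rw [hz]
        field_simp
        ring
      simp only [left_inl, map_zero, add_zero, LinearMap.zero_apply, sub_zero, h3,
        AddChar.map_add_eq_mul]
      intro h
      exact hψ0 (mul_eq_left₀ (addChar_ne_zero ψ _) |>.1 h)

end Heis

/-! ### Normal structure and character degrees of the semidirect product -/

theorem isNilpotentQuot_of_comm {G : Type*} [Group G] {A B : Subgroup G} [A.Normal]
    (h : ∀ x ∈ B, ∀ y ∈ B, (x * y)⁻¹ * (y * x) ∈ A) : IsNilpotentQuot A B := by
  refine Subgroup.isNilpotent_of_ker_le_center (1 : _ →* Unit) fun x _ => ?_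
  rw [Subgroup.mem_center_iff]
  rintro ⟨_, y, hy, rfl⟩
  obtain ⟨_, x, hx, rfl⟩ := x
  apply Subtype.ext
  exact (QuotientGroup.eq (s := A)).2 (h y hy x hx)

theorem isNilpotent_of_quot {G : Type*} [Group G] {A B : Subgroup G} [A.Normal]
    (hA : A = ⊥) (hB : B = ⊤) (h : IsNilpotentQuot A B) : Group.IsNilpotent G := by
  subst hA hB
  have : Group.IsNilpotent (↥((⊤ : Subgroup G).map (QuotientGroup.mk' ⊥))) := h
  refine Subgroup.isNilpotent_of_ker_le_center
    ((QuotientGroup.mk' (⊥ : Subgroup G)).codRestrict ((⊤ : Subgroup G).map _)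
      fun x => ⟨x, trivial, rfl⟩) fun x hx => ?_
  have hx' : x ∈ (QuotientGroup.mk' (⊥ : Subgroup G)).ker := congrArg Subtype.val hx
  rw [QuotientGroup.ker_mk', Subgroup.mem_bot] at hx'
  rw [hx']
  exact one_mem _

namespace Heis

open SemidirectProduct

section Structure

variable {p : ℕ} [Fact p.Prime] {V P C : Type} [AddCommGroup V] [Module (ZMod p) V]
  [FiniteDimensional (ZMod p) V]
  [CommGroup P] [CommGroup C] [Finite P] [Finite C] [DistribMulAction P V]
  [SMulCommClass P (ZMod p) V]
  {l : C →* (ZMod p)ˣ}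

/-- The centre of the Heisenberg group, as a subgroup of `G`. -/
def cen (V P : Type) {C : Type} [AddCommGroup V] [Module (ZMod p) V] [CommGroup P]
    [CommGroup C] [DistribMulAction P V] [SMulCommClass P (ZMod p) V] (l : C →* (ZMod p)ˣ) :
    Subgroup (Heis (ZMod p) V ⋊[act (P := P) l] (P × C)) where
  carrier := {x | ∃ z, x = inl ⟨0, 0, z⟩}
  one_mem' := ⟨0, rfl⟩
  mul_mem' := by
    rintro _ _ ⟨z, rfl⟩ ⟨z', rfl⟩
    exact ⟨z + z', by rw [← map_mul]; congr 1; ext1 <;> simp⟩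
  inv_mem' := by
    rintro _ ⟨z, rfl⟩
    exact ⟨-z, by rw [← map_inv]; congr 1; ext1 <;> simp⟩

instance cen_normal : (cen V P l).Normal where
  conj_mem := by
    rintro _ ⟨z, rfl⟩ x
    rw [conj_inl]
    exact ⟨(l x.right.2 : ZMod p) ^ 2 * z, by simp⟩

theorem isPGroup_heis : IsPGroup p (Heis (ZMod p) V) :=
  IsPGroup.of_card (by rw [card_eq, Nat.card_zmod])

theorem isPGroup_cen : IsPGroup p (cen V P l) := by
  have h : IsPGroup p (inl : _ →* Heis (ZMod p) V ⋊[act (P := P) l] (P × C)).range :=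
    isPGroup_heis.of_equiv (MonoidHom.ofInjective inl_injective)
  refine h.to_le ?_
  rintro _ ⟨z, rfl⟩
  exact ⟨_, rfl⟩

theorem cen_ne_bot : cen V P l ≠ ⊥ := by
  intro h
  have h1 : (inl ⟨0, 0, 1⟩ : Heis (ZMod p) V ⋊[act (P := P) l] (P × C)) ∈ cen V P l := ⟨1, rfl⟩
  rw [h, Subgroup.mem_bot] at h1
  exact one_ne_zero (congrArg (fun x => x.left.z) h1)

/-- Every nontrivial normal subgroup contains the centre of the Heisenberg group: commutators
move a nontrivial element first into the Heisenberg group, then into its centre. -/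
theorem cen_le [Nontrivial V] (hf : IsFree V P l)
    (N : Subgroup (Heis (ZMod p) V ⋊[act (P := P) l] (P × C))) [N.Normal] (hN : N ≠ ⊥) :
    cen V P l ≤ N := by
  have hcomm : ∀ x ∈ N, ∀ y, y * x * y⁻¹ * x⁻¹ ∈ N := fun x hx y =>
    N.mul_mem (Subgroup.Normal.conj_mem inferInstance x hx y) (N.inv_mem hx)
  have hcomm' : ∀ x ∈ N, ∀ y, x * y * x⁻¹ * y⁻¹ ∈ N := by
    intro x hx y
    have := N.mul_mem hx (Subgroup.Normal.conj_mem inferInstance _ (N.inv_mem hx) y)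
    simpa only [mul_assoc] using this
  -- the case of a non-central element of the Heisenberg group
  have key : ∀ a : Heis (ZMod p) V, inl a ∈ N → a.v ≠ 0 ∨ a.f ≠ 0 → cen V P l ≤ N := by
    rintro a ha h _ ⟨z, rfl⟩
    have h1 : ∀ e : Heis (ZMod p) V, inl ⟨0, 0, e.f a.v - a.f e.v⟩ ∈ N := by
      intro e
      have := hcomm _ ha (inl e)
      rw [← map_inv, ← map_inv, ← map_mul, ← map_mul, ← map_mul, conj_eq] at this
      convert this using 2
      ext1 <;> simp
      ring
    rcases h with h | h
    · obtain ⟨f, hff⟩ := exists_dual_eq h z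
      simpa [hff] using h1 ⟨0, f, 0⟩
    · obtain ⟨v, hv⟩ := exists_vec_eq h (-z)
      simpa [hv] using h1 ⟨v, 0, 0⟩
  obtain ⟨x, hx, hx1⟩ := N.bot_or_exists_ne_one.resolve_left hN
  by_cases hxr : x.right = 1
  · obtain ⟨a, rfl⟩ : ∃ a, x = inl a := ⟨x.left, by ext1 <;> simp [hxr]⟩
    by_cases h : a.v ≠ 0 ∨ a.f ≠ 0
    · exact key a hx h
    · push Not at h
      obtain ⟨v, f, z₀⟩ := a
      obtain ⟨hv, hff⟩ := h
      simp only at hv hff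
      subst hv hff
      have hz₀ : z₀ ≠ 0 := by
        rintro rfl
        exact hx1 rfl
      rintro _ ⟨z, rfl⟩
      have hpow : ∀ k : ℕ, (⟨0, 0, z₀⟩ : Heis (ZMod p) V) ^ k = ⟨0, 0, k * z₀⟩ := by
        intro k
        induction k with
        | zero => rw [pow_zero]; ext1 <;> simp
        | succ k ih => rw [pow_succ, ih]; ext1 <;> simp [add_mul]
      have := N.pow_mem hx (z / z₀).val
      rwa [← map_pow, hpow, ZMod.natCast_zmod_val, div_mul_cancel₀ _ hz₀] at this
  · obtain ⟨v, hv⟩ := exists_ne (0 : V)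
    have h1 := hcomm' x hx (inl ⟨v, 0, 0⟩)
    rw [conj_inl, ← map_inv, ← map_mul] at h1
    refine key _ h1 (Or.inl ?_)
    intro h
    rw [mul_v, inv_v, ← sub_eq_add_neg, sub_eq_zero] at h
    exact hv (hf _ hxr v h)

theorem isUniqueMinimalNormal_cen [Nontrivial V] (hf : IsFree V P l) :
    IsUniqueMinimalNormal (Heis (ZMod p) V ⋊[act (P := P) l] (P × C)) (cen V P l) := by
  refine ⟨⟨cen_normal, cen_ne_bot, fun M hM hle => ?_⟩, fun M ⟨hM, hM0, hM1⟩ => ?_⟩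
  · by_cases h : M = ⊥
    · exact Or.inl h
    · exact Or.inr (le_antisymm hle (cen_le hf M h))
  · exact ((hM1 _ cen_normal (cen_le hf M hM0)).resolve_left cen_ne_bot).symm

/-- A nilpotent group has a nontrivial centre, which would contain the centre of the Heisenberg
group; but `C` acts on the latter without fixed points. -/
theorem not_isNilpotent [Nontrivial V] [Nontrivial C] (hf : IsFree V P l)
    (hl : ∀ s, s ≠ 1 → (l s : ZMod p) ^ 2 ≠ 1) :
    ¬ Group.IsNilpotent (Heis (ZMod p) V ⋊[act (P := P) l] (P × C)) := by
  intro h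
  have : Nontrivial (Heis (ZMod p) V ⋊[act (P := P) l] (P × C)) := by
    obtain ⟨x, -, hx⟩ := (cen V P l).bot_or_exists_ne_one.resolve_left cen_ne_bot
    exact ⟨x, 1, hx⟩
  have h1 := cen_le hf (Subgroup.center _) (Group.IsNilpotent.center_ne_bot _)
  have h2 := Subgroup.mem_center_iff.1 (h1 ⟨1, rfl⟩)
  obtain ⟨s, hs⟩ := exists_ne (1 : C)
  have h3 := h2 (inr (1, s))
  rw [← mul_inv_eq_iff_eq_mul, conj_inl] at h3
  have h4 := congrArg (fun x => x.left.z) h3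
  simp only [left_inl] at h4
  apply hl s hs
  simpa using h4

/-- The Heisenberg group is nilpotent with abelian quotient `P × C`, while `G` is not
nilpotent. -/
theorem fittingHeight [Nontrivial V] [Nontrivial C] (hf : IsFree V P l)
    (hl : ∀ s, s ≠ 1 → (l s : ZMod p) ^ 2 ≠ 1) :
    FittingHeightIs (Heis (ZMod p) V ⋊[act (P := P) l] (P × C)) 2 := by
  have hnil := not_isNilpotent hf hl
  refine ⟨⟨fun i => if i = 0 then ⊥ else if i = 1 then inl.range else ⊤, rfl, rfl, ?_, ?_, ?_⟩,
    ?_⟩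
  · intro i
    dsimp only
    split_ifs
    · infer_instance
    · rw [range_inl_eq_ker_rightHom]
      infer_instance
    · infer_instance
  · intro i hi
    interval_cases i
    · exact bot_le
    · exact le_top
  · intro i hi hn
    interval_cases i
    · have h1 : IsPGroup p (inl : _ →* Heis (ZMod p) V ⋊[act (P := P) l] (P × C)).range :=
        isPGroup_heis.of_equiv (MonoidHom.ofInjective inl_injective)
      exact (h1.map (QuotientGroup.mk'
        (⊥ : Subgroup (Heis (ZMod p) V ⋊[act (P := P) l] (P × C))))).isNilpotent
    · apply isNilpotentQuot_of_comm
      intro x _ y _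
      change _ ∈ (inl : _ →* Heis (ZMod p) V ⋊[act (P := P) l] (P × C)).range
      rw [range_inl_eq_ker_rightHom, MonoidHom.mem_ker, map_mul, map_inv, map_mul, map_mul,
        mul_comm (rightHom y), inv_mul_cancel]
  · rintro m ⟨F, h0, h1, h2, h3, h4⟩
    by_contra! hm
    apply hnil
    interval_cases m
    · have : Subsingleton (Heis (ZMod p) V ⋊[act (P := P) l] (P × C)) := by
        rw [← Subgroup.subsingleton_iff, ← subsingleton_iff_bot_eq_top, ← h0, h1]
      infer_instance
    · have := h2 0
      exact isNilpotent_of_quot h0 h1 (h4 0 one_pos (h2 0))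

/-- The three degrees are those of the irreducible representations that are trivial on the
Heisenberg group, trivial only on its centre, and nontrivial on the centre; each kind occurs by
`exists_irr`. -/
theorem charDegrees_eq [Nontrivial V] [Nontrivial P] (hf : IsFree V P l)
    (hl : ∀ s, s ≠ 1 → (l s : ZMod p) ^ 2 ≠ 1) :
    charDegrees (Heis (ZMod p) V ⋊[act (P := P) l] (P × C))
      = {1, Nat.card P * Nat.card C, Nat.card C * p ^ Module.finrank (ZMod p) V} := by
  ext d
  rw [mem_charDegrees]
  simp only [Set.mem_insert_iff, Set.mem_singleton_iff]
  constructor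
  · rintro ⟨W, _, _, _, ρ, hρ, rfl⟩
    by_cases hZ : ∀ z, ρ (inl ⟨0, 0, z⟩) = 1
    · by_cases hE : ∀ a, ρ (inl a) = 1
      · exact Or.inl (finrank_of_trivial ρ hρ hE)
      · push Not at hE
        obtain ⟨e₀, he₀⟩ := hE
        exact Or.inr (Or.inl (finrank_of_central_trivial hf ρ hρ hZ e₀ he₀))
    · push Not at hZ
      obtain ⟨z₀, hz₀⟩ := hZ
      exact Or.inr (Or.inr (finrank_of_central_nontrivial hl ρ hρ z₀ hz₀))
  · rintro (rfl | rfl | rfl)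
    · obtain ⟨g, hg⟩ := exists_ne (1 : P)
      have : (inl : _ →* Heis (ZMod p) V ⋊[act (P := P) l] (P × C)).range.Normal := by
        rw [range_inl_eq_ker_rightHom]
        infer_instance
      obtain ⟨W, _, _, _, ρ, hρ, hN, -⟩ := exists_irr
        (inl : _ →* Heis (ZMod p) V ⋊[act (P := P) l] (P × C)).range (inr (g, 1)) (by
          rw [range_inl_eq_ker_rightHom, MonoidHom.mem_ker, rightHom_inr]
          exact fun h => hg (congrArg Prod.fst h))
      exact ⟨W, inferInstance, inferInstance, inferInstance, ρ, hρ,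
        finrank_of_trivial ρ hρ fun a => hN _ ⟨a, rfl⟩⟩
    · obtain ⟨v, hv⟩ := exists_ne (0 : V)
      obtain ⟨W, _, _, _, ρ, hρ, hN, hx⟩ := exists_irr (cen V P l) (inl ⟨v, 0, 0⟩) (by
        rintro ⟨z, hz⟩
        exact hv (congrArg (fun x => x.left.v) hz))
      exact ⟨W, inferInstance, inferInstance, inferInstance, ρ, hρ,
        finrank_of_central_trivial hf ρ hρ (fun z => hN _ ⟨z, rfl⟩) _ hx⟩
    · obtain ⟨W, _, _, _, ρ, hρ, -, hx⟩ := exists_irr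
        (⊥ : Subgroup (Heis (ZMod p) V ⋊[act (P := P) l] (P × C))) (inl ⟨0, 0, 1⟩) (by
          rw [Subgroup.mem_bot]
          exact fun h => one_ne_zero (congrArg (fun x => x.left.z) h))
      exact ⟨W, inferInstance, inferInstance, inferInstance, ρ, hρ,
        finrank_of_central_nontrivial hl ρ hρ 1 hx⟩

end Structure
end Heis

/-! ### The action of `Z_{p₁} × Z_r` -/

/-- If `r` divides `p - 1`, then `Z_r` embeds in the units of the field of order `p`; the squares
of the nontrivial values are nontrivial since `r` is odd. -/
theorem exists_scalar (r p : ℕ) [Fact r.Prime] [Fact p.Prime] (hr : Odd r) (hd : r ∣ p - 1) :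
    ∃ l : Multiplicative (ZMod r) →* (ZMod p)ˣ, ∀ s, s ≠ 1 → (l s : ZMod p) ^ 2 ≠ 1 := by
  obtain ⟨u, hu⟩ := exists_prime_orderOf_dvd_card' (G := (ZMod p)ˣ) r
    (by rwa [Nat.card_eq_fintype_card, ZMod.card_units])
  have e : Multiplicative (ZMod r) ≃* Subgroup.zpowers u := mulEquivOfPrimeCardEq (p := r)
    (by rw [Nat.card_congr Multiplicative.toAdd, Nat.card_zmod]) (by rw [Nat.card_zpowers, hu])
  refine ⟨(Subgroup.zpowers u).subtype.comp e.toMonoidHom, fun s hs h => hs ?_⟩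
  have h1 : e s ^ 2 = 1 := by
    apply Subtype.ext
    apply Units.ext
    simpa using h
  rw [← map_pow, map_eq_one_iff e e.injective] at h1
  have h2 : s ^ r = 1 := by
    have := pow_card_eq_one' (x := s)
    rwa [Nat.card_congr Multiplicative.toAdd, Nat.card_zmod] at this
  have h3 := pow_gcd_eq_one.2 ⟨h1, h2⟩
  rwa [(Nat.coprime_two_left.2 hr).gcd_eq_one, pow_one] at h3

/-- If `(g, s)` fixes `v ≠ 0`, then taking `p₁`-th powers shows that the scalar `l s` has order
dividing both `p₁` and `r`, so `s = 1`. The fixed points of `g` are then a nonzero submodule,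
hence all of `V`, and `g = 1` because a nontrivial `g` generates `Z_{p₁}`, which acts
nontrivially. -/
theorem isFree_of_irr (r p₁ p₂ : ℕ) [Fact r.Prime] [Fact p₁.Prime] [Fact p₂.Prime] (h1r : p₁ ≠ r)
    {V : Type} [AddCommGroup V] [Module (ZMod p₂) V]
    [DistribMulAction (Multiplicative (ZMod p₁)) V]
    [SMulCommClass (Multiplicative (ZMod p₁)) (ZMod p₂) V]
    (hVnontriv : ∃ (g : Multiplicative (ZMod p₁)) (v : V), g • v ≠ v)
    (hVirr : ∀ W : Submodule (ZMod p₂) V,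
      (∀ g : Multiplicative (ZMod p₁), ∀ w ∈ W, g • w ∈ W) → W = ⊥ ∨ W = ⊤)
    (l : Multiplicative (ZMod r) →* (ZMod p₂)ˣ)
    (hl : ∀ s, s ≠ 1 → (l s : ZMod p₂) ^ 2 ≠ 1) :
    Heis.IsFree V (Multiplicative (ZMod p₁)) l := by
  rintro ⟨g, s⟩ hgs v hv
  by_contra hv0
  rw [Heis.actV_apply] at hv
  simp only at hv
  have hpow : ∀ k : ℕ, ((l s : ZMod p₂) ^ k) • g ^ k • v = v := by
    intro k
    induction k with
    | zero => simp
    | succ k ih =>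
      conv_rhs => rw [← ih, ← hv]
      rw [pow_succ, pow_succ, mul_smul, mul_smul, smul_comm (g ^ k) (l s : ZMod p₂)]
  have hg : g ^ p₁ = 1 := by
    have := pow_card_eq_one' (x := g)
    rwa [Nat.card_congr Multiplicative.toAdd, Nat.card_zmod] at this
  have hs : s ^ r = 1 := by
    have := pow_card_eq_one' (x := s)
    rwa [Nat.card_congr Multiplicative.toAdd, Nat.card_zmod] at this
  have h1 : l s ^ p₁ = 1 := by
    have h := hpow p₁
    rw [hg, one_smul] at h
    apply Units.ext
    rw [Units.val_pow_eq_pow_val, Units.val_one]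
    exact smul_left_injective (ZMod p₂) hv0 (by simpa using h)
  have h2 : l s ^ r = 1 := by rw [← map_pow, hs, map_one]
  have h3 : l s = 1 := by
    have h := pow_gcd_eq_one.2 ⟨h1, h2⟩
    rwa [(Nat.coprime_primes Fact.out Fact.out).2 h1r, pow_one] at h
  have h4 : s = 1 := by
    by_contra h
    exact hl s h (by rw [h3]; simp)
  subst h4
  have hg1 : g ≠ 1 := by
    rintro rfl
    exact hgs rfl
  rw [map_one, Units.val_one, one_smul] at hv
  -- the fixed points of `g` form a nonzero submodule
  have hfix : ∀ w : V, g • w = w := by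
    have h := hVirr (LinearMap.ker
      (DistribSMul.toLinearMap (ZMod p₂) V g - LinearMap.id)) (by
        intro k w hw
        rw [LinearMap.mem_ker, LinearMap.sub_apply, sub_eq_zero] at hw ⊢
        change g • w = w at hw
        change g • k • w = k • w
        rw [smul_smul, mul_comm, mul_smul, hw])
    have hv' : v ∈ LinearMap.ker (DistribSMul.toLinearMap (ZMod p₂) V g - LinearMap.id) := by
      rw [LinearMap.mem_ker, LinearMap.sub_apply, sub_eq_zero]
      exact hv
    have h := h.resolve_left (fun h => by rw [h] at hv'; exact hv0 hv')
    intro w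
    have hw : w ∈ LinearMap.ker (DistribSMul.toLinearMap (ZMod p₂) V g - LinearMap.id) := by
      rw [h]
      trivial
    rw [LinearMap.mem_ker, LinearMap.sub_apply, sub_eq_zero] at hw
    exact hw
  obtain ⟨k, w, hkw⟩ := hVnontriv
  apply hkw
  have hk : k ∈ Subgroup.zpowers g := mem_zpowers_of_prime_card (p := p₁)
    (by rw [Nat.card_congr Multiplicative.toAdd, Nat.card_zmod]) hg1
  have hle : Subgroup.zpowers g ≤ MulAction.stabilizer (Multiplicative (ZMod p₁)) w := by
    rw [Subgroup.zpowers_le]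
    exact hfix w
  exact hle hk

/-- Let `r` be an odd prime and `p₁ ≠ p₂` primes different from `r` with
`r ∣ p₁ - 1` and `r ∣ p₂ - 1`, and let `n` be the dimension of an irreducible nontrivial
module `V` for `Z_{p₁}` over the field of order `p₂`. Then there are an extraspecial
`p₂`-group `E` of order `p₂ ^ (2n + 1)` and an action of `Z_{p₁} × Z_r` on `E` by
automorphisms such that `G = E ⋊ (Z_{p₁} × Z_r)` has character degree set
`{1, r·p₁, r·p₂ⁿ}`, is a `{p₁, p₂, r}`-group, has a unique minimal normal subgroup which is
a `p₂`-group, and has Fitting height `2`. -/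
theorem three_primes_base (r : ℕ) [hr : Fact r.Prime] (hrodd : Odd r)
    (p₁ p₂ : ℕ) [hp₁ : Fact p₁.Prime] [hp₂ : Fact p₂.Prime] (hne : p₁ ≠ p₂)
    (h1r : p₁ ≠ r) (h2r : p₂ ≠ r) (hd1 : r ∣ p₁ - 1) (hd2 : r ∣ p₂ - 1)
    (V : Type) [AddCommGroup V] [Module (ZMod p₂) V] [FiniteDimensional (ZMod p₂) V]
    [Nontrivial V] [DistribMulAction (Multiplicative (ZMod p₁)) V]
    [SMulCommClass (Multiplicative (ZMod p₁)) (ZMod p₂) V]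
    (hVnontriv : ∃ (g : Multiplicative (ZMod p₁)) (v : V), g • v ≠ v)
    (hVirr : ∀ W : Submodule (ZMod p₂) V,
      (∀ g : Multiplicative (ZMod p₁), ∀ w ∈ W, g • w ∈ W) → W = ⊥ ∨ W = ⊤)
    (n : ℕ) (hn : Module.finrank (ZMod p₂) V = n) :
    ∃ (E : Type) (_ : Group E) (_ : Finite E),
      IsExtraspecial p₂ E ∧ Nat.card E = p₂ ^ (2 * n + 1) ∧
      ∃ φ : Multiplicative (ZMod p₁) × Multiplicative (ZMod r) →* MulAut E,
        charDegrees (E ⋊[φ] (Multiplicative (ZMod p₁) × Multiplicative (ZMod r)))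
          = {1, r * p₁, r * p₂ ^ n} ∧
        (Nat.card (E ⋊[φ] (Multiplicative (ZMod p₁) × Multiplicative (ZMod r)))).primeFactors
          ⊆ ({p₁, p₂, r} : Finset ℕ) ∧
        (∃ M : Subgroup (E ⋊[φ] (Multiplicative (ZMod p₁) × Multiplicative (ZMod r))),
          IsUniqueMinimalNormal
            (E ⋊[φ] (Multiplicative (ZMod p₁) × Multiplicative (ZMod r))) M ∧
          IsPGroup p₂ ↥M) ∧
        FittingHeightIs
          (E ⋊[φ] (Multiplicative (ZMod p₁) × Multiplicative (ZMod r))) 2 := by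
  obtain ⟨l, hl⟩ := exists_scalar r p₂ hrodd hd2
  have hf := isFree_of_irr r p₁ p₂ h1r hVnontriv hVirr l hl
  have hP : Nat.card (Multiplicative (ZMod p₁)) = p₁ := by
    rw [Nat.card_congr Multiplicative.toAdd, Nat.card_zmod]
  have hC : Nat.card (Multiplicative (ZMod r)) = r := by
    rw [Nat.card_congr Multiplicative.toAdd, Nat.card_zmod]
  refine ⟨Heis (ZMod p₂) V, inferInstance, inferInstance,
    ⟨Heis.isPGroup_heis, Heis.commutator_eq_center.symm, ?_⟩, ?_, Heis.act l, ?_, ?_,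
    ⟨Heis.cen V _ l, Heis.isUniqueMinimalNormal_cen hf, Heis.isPGroup_cen⟩,
    Heis.fittingHeight hf hl⟩
  · rw [Heis.card_center, Nat.card_zmod]
  · rw [Heis.card_eq, Nat.card_zmod, hn]
  · rw [Heis.charDegrees_eq hf hl, hP, hC, hn, mul_comm p₁]
  · rw [SemidirectProduct.card, Heis.card_eq, Nat.card_zmod, Nat.card_prod, hP, hC]
    intro q hq
    have hq' := Nat.prime_of_mem_primeFactors hq
    have h := Nat.dvd_of_mem_primeFactors hq
    simp only [Finset.mem_insert, Finset.mem_singleton]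
    rcases hq'.dvd_mul.1 h with h | h
    · exact Or.inr (Or.inl ((Nat.prime_dvd_prime_iff_eq hq' Fact.out).1 (hq'.dvd_of_dvd_pow h)))
    · rcases hq'.dvd_mul.1 h with h | h
      · exact Or.inl ((Nat.prime_dvd_prime_iff_eq hq' Fact.out).1 h)
      · exact Or.inr (Or.inr ((Nat.prime_dvd_prime_iff_eq hq' Fact.out).1 h))
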